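/- Let (G_t,H_t), t ∈ ℕ, be a sequence of CSS pairs of strictly increasing block lengths n_t, such that every row of every G_t and every H_t has Hamming weight at most m (m ≥ 2), and such that the CSS distances satisfy min(d_{G_t}, d_{H_t}) ≥ D·ln(n_t) for some constant D > 0. Then for every K > 0 and 0 ≤ p ≤ 1 satisfying (m−1)·[e^{−2K}(1−p) + e^{2K}p] < e^{−1/D}, the point (p,K) is in the decodable region: lim_{t→∞} P_succ(G_t,H_t;K,p) = 1. -/

import Mathlib

open Matrix Filter

/-- Partition function `Z_e(G;K)` of the random-bond Ising model in Wegner's form. -/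
noncomputable def Zf {ρ : Type*} [Fintype ρ] [DecidableEq ρ] {n : ℕ}
    (G : Matrix ρ (Fin n) (ZMod 2)) (e : Fin n → ZMod 2) (K : ℝ) : ℝ :=
  ∑ α : ρ → ZMod 2,
    Real.exp (K * ∑ b : Fin n, (-1 : ℝ) ^ ((e b).val + ((Matrix.vecMul α G) b).val))

/-- `Hs` is an adapted dual of `H`: it stacks `G` on top of `k` extra rows, and its
row space equals `C_H^⊥ = {c | H cᵀ = 0}`. -/
def IsAdaptedDual {rG rH k n : ℕ} (G : Matrix (Fin rG) (Fin n) (ZMod 2))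
    (H : Matrix (Fin rH) (Fin n) (ZMod 2))
    (Hs : Matrix (Fin rG ⊕ Fin k) (Fin n) (ZMod 2)) : Prop :=
  (∀ i, Hs (Sum.inl i) = G i) ∧
  LinearMap.range Hs.vecMulLinear = LinearMap.ker H.mulVecLin

/-- Homological difference `ΔF_e(G,H;K) = ln Z_e(H*;K) − ln Z_e(G;K)`. -/
noncomputable def deltaF {ρ ρ' : Type*} [Fintype ρ] [DecidableEq ρ] [Fintype ρ'] [DecidableEq ρ'] {n : ℕ}
    (G : Matrix ρ (Fin n) (ZMod 2)) (Hs : Matrix ρ' (Fin n) (ZMod 2))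
    (e : Fin n → ZMod 2) (K : ℝ) : ℝ :=
  Real.log (Zf Hs e K) - Real.log (Zf G e K)

/-- Disorder average `[X_e]_p = Σ_e p^{|e|}(1−p)^{n−|e|} X_e`. -/
noncomputable def davg {n : ℕ} (p : ℝ) (X : (Fin n → ZMod 2) → ℝ) : ℝ :=
  ∑ e : Fin n → ZMod 2, p ^ hammingNorm e * (1 - p) ^ (n - hammingNorm e) * X e

/-- Average success probability of maximum-likelihood decoding. -/
noncomputable def Psucc {ρ ρ' : Type*} [Fintype ρ] [DecidableEq ρ] [Fintype ρ'] [DecidableEq ρ'] {n : ℕ}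
    (G : Matrix ρ (Fin n) (ZMod 2)) (Hs : Matrix ρ' (Fin n) (ZMod 2))
    (K p : ℝ) : ℝ :=
  davg p (fun e => Zf G e K / Zf Hs e K)

/-- CSS distance `d_G`: minimum Hamming weight of a vector `c` with `H cᵀ = 0`
that is not in the row space of `G`. -/
noncomputable def dCSS {rG rH n : ℕ} (G : Matrix (Fin rG) (Fin n) (ZMod 2))
    (H : Matrix (Fin rH) (Fin n) (ZMod 2)) : ℕ :=
  sInf {w | ∃ c : Fin n → ZMod 2,
    H.mulVec c = 0 ∧ (¬ ∃ α, Matrix.vecMul α G = c) ∧ hammingNorm c = w}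

/-!
This is a Peierls argument. Decoding fails through the nontrivial words of the code `ker H`, those
outside the row space of `G`. Each of them contains a minimal nontrivial support `c`, and erasing
`c` from the word changes its Boltzmann weight by a factor depending on the error only along `c`.
So the failure probability is at most the sum over minimal supports `c` of the disorder average
`q ^ #c` of that factor, where `q = e^{-2K} (1 - p) + e^{2K} p`.

Minimal supports are few. A proper nonempty part of one is never a word of the code, hence violates
some row of `H`; that row has at most `m` entries, one of them already in the part, so the part
extends in at most `m - 1` ways, and there are at most `n (m - 1) ^ (w - 1)` minimal supports of
weight `w`. With `x = (m - 1) q` the sum is at most `n x ^ d / (1 - x)`, and `d ≥ D log n` turns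
`n x ^ d` into `n ^ (1 + D log x)`, an exponent that is negative exactly when `x < e^{-1/D}`.
-/

open Finset

section IndicatorWords

variable {ι : Type*} [DecidableEq ι]

/-- The binary word with support `c`. Supports are taken as finsets so that minimal words
are those minimal for `⊆`. -/
def charVec (c : Finset ι) : ι → ZMod 2 := fun b ↦ if b ∈ c then 1 else 0

theorem charVec_empty : charVec (∅ : Finset ι) = 0 := by
  ext b
  simp [charVec]

theorem charVec_sdiff {S c : Finset ι} (h : S ⊆ c) :
    charVec (c \ S) = charVec c - charVec S := by
  ext b
  by_cases hb : b ∈ S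
  · simp [charVec, hb, h hb]
  · simp [charVec, hb]

theorem exists_charVec_eq [Finite ι] (v : ι → ZMod 2) : ∃ c, charVec c = v := by
  have := Fintype.ofFinite ι
  refine ⟨({b | v b = 1} : Finset ι), funext fun b ↦ ?_⟩
  by_cases h : v b = 0
  · simp [charVec, h]
  · have h1 : v b = 1 := Fin.eq_one_of_ne_zero (v b) h
    simp [charVec, h1]

variable [Fintype ι]

theorem hammingNorm_charVec (c : Finset ι) : hammingNorm (charVec c) = #c := by
  simp [hammingNorm, charVec]

theorem dotProduct_charVec (w : ι → ZMod 2) (c : Finset ι) :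
    w ⬝ᵥ charVec c = ∑ b ∈ c, w b := by
  simp [dotProduct, charVec]

end IndicatorWords

section Counting

variable {ι : Type*} [DecidableEq ι]

/-- A branching rule for growing the members of the family `M` one element at a time: whatever
nonempty part `S` of a member has been found, the next element can be chosen among at most `q`
candidates. -/
def HasBranching (M : Finset (Finset ι)) (q : ℕ) : Prop :=
  ∀ S : Finset ι, S.Nonempty →
    ∃ B : Finset ι, #B ≤ q ∧ ∀ c ∈ M, S ⊂ c → ∃ b ∈ B \ S, b ∈ c

namespace HasBranching

variable {M : Finset (Finset ι)} {q : ℕ}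

theorem card_filter_superset_le (hM : HasBranching M q) (j : ℕ) {S : Finset ι}
    (hS : S.Nonempty) : #{c ∈ M | S ⊆ c ∧ #c = #S + j} ≤ q ^ j := by
  induction j generalizing S with
  | zero =>
    rw [pow_zero, card_le_one]
    have eq_S : ∀ c ∈ ({c ∈ M | S ⊆ c ∧ #c = #S + 0} : Finset _), S = c := fun c hc ↦
      eq_of_subset_of_card_le (mem_filter.1 hc).2.1 (mem_filter.1 hc).2.2.le
    exact fun c hc c' hc' ↦ (eq_S c hc).symm.trans (eq_S c' hc')
  | succ j ih =>
    obtain ⟨B, hBq, hB⟩ := hM S hS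
    have cover : ({c ∈ M | S ⊆ c ∧ #c = #S + (j + 1)} : Finset _) ⊆
        (B \ S).biUnion fun b ↦ {c ∈ M | insert b S ⊆ c ∧ #c = #(insert b S) + j} := by
      intro c hc
      obtain ⟨hcM, hSc, hcard⟩ := mem_filter.1 hc
      have hssub : S ⊂ c := hSc.ssubset_of_ne (by rintro rfl; omega)
      obtain ⟨b, hb, hbc⟩ := hB c hcM hssub
      refine mem_biUnion.2 ⟨b, hb, mem_filter.2 ⟨hcM, insert_subset hbc hSc, ?_⟩⟩
      rw [card_insert_of_notMem (mem_sdiff.1 hb).2]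
      omega
    calc #{c ∈ M | S ⊆ c ∧ #c = #S + (j + 1)}
        ≤ #(B \ S) * q ^ j := (card_le_card cover).trans
          (card_biUnion_le_card_mul _ _ _ fun b _ ↦ ih (insert_nonempty b S))
      _ ≤ q * q ^ j := by
          gcongr
          exact (card_le_card sdiff_subset).trans hBq
      _ = q ^ (j + 1) := (pow_succ' q j).symm

variable [Fintype ι]

theorem card_filter_card_eq_succ_le (hM : HasBranching M q) (j : ℕ) :
    #{c ∈ M | #c = j + 1} ≤ Fintype.card ι * q ^ j := by
  have cover : ({c ∈ M | #c = j + 1} : Finset _) ⊆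
      univ.biUnion fun b : ι ↦ {c ∈ M | {b} ⊆ c ∧ #c = #{b} + j} := by
    intro c hc
    obtain ⟨hcM, hcard⟩ := mem_filter.1 hc
    obtain ⟨b, hb⟩ : c.Nonempty := card_pos.1 (by omega)
    refine mem_biUnion.2 ⟨b, mem_univ b, mem_filter.2 ⟨hcM, singleton_subset_iff.2 hb, ?_⟩⟩
    rw [card_singleton]
    omega
  exact (card_le_card cover).trans
    (card_biUnion_le_card_mul _ _ _ fun b _ ↦
      hM.card_filter_superset_le j (singleton_nonempty b))

theorem card_filter_card_eq_le (hM : HasBranching M q) (hq : 1 ≤ q) (hne : ∅ ∉ M) (w : ℕ) :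
    #{c ∈ M | #c = w} ≤ Fintype.card ι * q ^ w := by
  rcases w with _ | j
  · rw [filter_eq_empty_iff.2 fun c hc h ↦ hne (card_eq_zero.1 h ▸ hc), card_empty]
    exact Nat.zero_le _
  · grw [hM.card_filter_card_eq_succ_le j, Nat.pow_le_pow_right hq j.le_succ]

theorem sum_pow_card_le (hM : HasBranching M q) (hq : 1 ≤ q) (hne : ∅ ∉ M) {d : ℕ}
    (hd : ∀ c ∈ M, d ≤ #c) {y : ℝ} (hy : 0 ≤ y) (hqy : q * y < 1) :
    ∑ c ∈ M, y ^ #c ≤ Fintype.card ι * ((q * y) ^ d / (1 - q * y)) := by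
  have hmaps : ∀ c ∈ M, #c ∈ Ico d (Fintype.card ι + 1) := fun c hc ↦
    mem_Ico.2 ⟨hd c hc, Nat.lt_succ_of_le (card_le_univ c)⟩
  calc ∑ c ∈ M, y ^ #c
      = ∑ w ∈ Ico d (Fintype.card ι + 1), ∑ c ∈ M with #c = w, y ^ #c :=
        (sum_fiberwise_of_maps_to hmaps _).symm
    _ = ∑ w ∈ Ico d (Fintype.card ι + 1), (#{c ∈ M | #c = w} : ℝ) * y ^ w := by
        refine sum_congr rfl fun w _ ↦ ?_
        rw [sum_congr rfl fun c hc ↦ by rw [(mem_filter.1 hc).2], sum_const, nsmul_eq_mul]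
    _ ≤ ∑ w ∈ Ico d (Fintype.card ι + 1), Fintype.card ι * (q * y) ^ w := by
        refine sum_le_sum fun w _ ↦ ?_
        rw [mul_pow, ← mul_assoc]
        gcongr
        exact_mod_cast hM.card_filter_card_eq_le hq hne w
    _ = Fintype.card ι * ∑ w ∈ Ico d (Fintype.card ι + 1), (q * y) ^ w :=
        (mul_sum _ _ _).symm
    _ ≤ Fintype.card ι * ((q * y) ^ d / (1 - q * y)) := by
        gcongr
        exact geom_sum_Ico_le_of_lt_one (by positivity) hqy

end HasBranching

end Counting

section MinimalSupports

variable {ι : Type*} [Fintype ι] [DecidableEq ι]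

open scoped Classical in
/-- The supports of the nontrivial words of the code `C` (those outside the subcode `T` of
trivial words) that contain no smaller such support. For a CSS pair, `T` is the row space of `G`
and `C` the kernel of `H`. -/
noncomputable def minimalSupports (T C : Submodule (ZMod 2) (ι → ZMod 2)) :
    Finset (Finset ι) :=
  {c | Minimal (fun c ↦ charVec c ∈ C ∧ charVec c ∉ T) c}

variable {T C : Submodule (ZMod 2) (ι → ZMod 2)} {c : Finset ι}

theorem mem_minimalSupports :
    c ∈ minimalSupports T C ↔ Minimal (fun c ↦ charVec c ∈ C ∧ charVec c ∉ T) c := by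
  simp [minimalSupports]

theorem empty_notMem_minimalSupports : ∅ ∉ minimalSupports T C := fun h ↦
  (mem_minimalSupports.1 h).prop.2 (charVec_empty (ι := ι) ▸ T.zero_mem)

theorem exists_mem_minimalSupports_of_mem_of_notMem {v : ι → ZMod 2} (hC : v ∈ C)
    (hT : v ∉ T) : ∃ c ∈ minimalSupports T C, ∀ b ∈ c, v b = 1 := by
  obtain ⟨s, rfl⟩ := exists_charVec_eq v
  obtain ⟨c, hcs, hc⟩ := exists_minimal_le_of_wellFoundedLT
    (fun c ↦ charVec c ∈ C ∧ charVec c ∉ T) s ⟨hC, hT⟩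
  exact ⟨c, mem_minimalSupports.2 hc, fun b hb ↦ if_pos (hcs hb)⟩

/- If a proper part `S` of `c` were a word of the code, so would be its complement in `c`; by
minimality both would be trivial, and hence so would be their sum `c`. -/
theorem charVec_notMem_of_ssubset_of_mem_minimalSupports (hc : c ∈ minimalSupports T C)
    {S : Finset ι} (hS : S.Nonempty) (hSc : S ⊂ c) : charVec S ∉ C := by
  have hmin := mem_minimalSupports.1 hc
  have trivial_of_ssubset : ∀ s ⊂ c, charVec s ∈ C → charVec s ∈ T := fun s hs hsC ↦
    by_contra fun hsT ↦ hmin.not_prop_of_lt hs ⟨hsC, hsT⟩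
  intro hSC
  have hST : charVec S ∈ T := trivial_of_ssubset S hSc hSC
  have hdiff : charVec c - charVec S ∈ T := by
    rw [← charVec_sdiff hSc.subset]
    refine trivial_of_ssubset _ (sdiff_ssubset hSc.subset hS) ?_
    rw [charVec_sdiff hSc.subset]
    exact C.sub_mem hmin.prop.1 hSC
  exact hmin.prop.2 ((T.sub_mem_iff_left hST).1 hdiff)

theorem exists_hitting_finset_of_sum_ne_zero {R : Type*} [AddCommMonoid R]
    [DecidableEq R] {h : ι → R} {S : Finset ι} (hS : ∑ b ∈ S, h b ≠ 0) :
    ∃ B : Finset ι, #B = hammingNorm h - 1 ∧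
      ∀ c, S ⊆ c → ∑ b ∈ c, h b = 0 → ∃ b ∈ B \ S, b ∈ c := by
  obtain ⟨b₀, hb₀S, hb₀⟩ := exists_ne_zero_of_sum_ne_zero hS
  refine ⟨({b | h b ≠ 0} : Finset ι).erase b₀, card_erase_of_mem (by simpa using hb₀),
    fun c hSc hc ↦ ?_⟩
  have hrest : ∑ b ∈ c \ S, h b ≠ 0 := fun h0 ↦ hS <| by
    rwa [← sum_sdiff hSc, h0, zero_add] at hc
  obtain ⟨b, hb, hhb⟩ := exists_ne_zero_of_sum_ne_zero hrest
  obtain ⟨hbc, hbS⟩ := mem_sdiff.1 hb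
  exact ⟨b, by simp [hhb, hbS, ne_of_mem_of_not_mem hb₀S hbS |>.symm], hbc⟩

theorem hasBranching_minimalSupports_ker {κ : Type*} (T : Submodule (ZMod 2) (ι → ZMod 2))
    {H : Matrix κ ι (ZMod 2)} {m : ℕ} (hH : ∀ i, hammingNorm (H i) ≤ m) :
    HasBranching (minimalSupports T (LinearMap.ker H.mulVecLin)) (m - 1) := by
  intro S hS
  by_cases hSker : charVec S ∈ LinearMap.ker H.mulVecLin
  · exact ⟨∅, by simp, fun c hc hSc ↦
      (charVec_notMem_of_ssubset_of_mem_minimalSupports hc hS hSc hSker).elim⟩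
  · obtain ⟨i, hi⟩ : ∃ i, ∑ b ∈ S, H i b ≠ 0 := by
      simpa [funext_iff, mulVec, dotProduct_charVec] using hSker
    obtain ⟨B, hBcard, hB⟩ := exists_hitting_finset_of_sum_ne_zero hi
    refine ⟨B, hBcard.trans_le (Nat.sub_le_sub_right (hH i) 1), fun c hc hSc ↦
      hB c hSc.subset ?_⟩
    rw [← dotProduct_charVec]
    exact congrFun (mem_minimalSupports.1 hc).prop.1 i

theorem dCSS_le_card_of_mem_minimalSupports {rG rH n : ℕ}
    {G : Matrix (Fin rG) (Fin n) (ZMod 2)} {H : Matrix (Fin rH) (Fin n) (ZMod 2)}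
    {c : Finset (Fin n)}
    (hc : c ∈ minimalSupports (LinearMap.range G.vecMulLinear) (LinearMap.ker H.mulVecLin)) :
    dCSS G H ≤ #c :=
  have hprop := (mem_minimalSupports.1 hc).prop
  Nat.sInf_le ⟨charVec c, hprop.1, hprop.2, hammingNorm_charVec c⟩

theorem sum_minimalSupports_pow_card_le {rG rH n m : ℕ} (hm : 2 ≤ m)
    (G : Matrix (Fin rG) (Fin n) (ZMod 2)) {H : Matrix (Fin rH) (Fin n) (ZMod 2)}
    (hH : ∀ i, hammingNorm (H i) ≤ m) {y : ℝ} (hy : 0 ≤ y) (hmy : ((m : ℝ) - 1) * y < 1) :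
    ∑ c ∈ minimalSupports (LinearMap.range G.vecMulLinear) (LinearMap.ker H.mulVecLin),
      y ^ #c ≤ n * ((((m : ℝ) - 1) * y) ^ dCSS G H / (1 - ((m : ℝ) - 1) * y)) := by
  have hcast : ((m - 1 : ℕ) : ℝ) = (m : ℝ) - 1 := by
    rw [Nat.cast_sub (by omega), Nat.cast_one]
  rw [← hcast] at hmy ⊢
  simpa using (hasBranching_minimalSupports_ker _ hH).sum_pow_card_le (by omega)
    empty_notMem_minimalSupports (fun _ ↦ dCSS_le_card_of_mem_minimalSupports) hy hmy

end MinimalSupports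

section Peierls

variable {ι : Type*}

/-- The factor by which switching on the bits of `c` changes a Boltzmann weight. -/
noncomputable def flipFactor (K : ℝ) (e : ι → ZMod 2) (c : Finset ι) : ℝ :=
  ∏ b ∈ c, Real.exp (-(2 * K) * (-1) ^ (e b).val)

theorem flipFactor_pos (K : ℝ) (e : ι → ZMod 2) (c : Finset ι) : 0 < flipFactor K e c :=
  prod_pos fun _ _ ↦ Real.exp_pos _

variable [Fintype ι]

/-- The Boltzmann weight of the word `v` at coupling `K` for the error `e`. -/
noncomputable def boltzmannWeight (K : ℝ) (e v : ι → ZMod 2) : ℝ :=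
  Real.exp (K * ∑ b, (-1 : ℝ) ^ ((e b).val + (v b).val))

theorem boltzmannWeight_pos (K : ℝ) (e v : ι → ZMod 2) : 0 < boltzmannWeight K e v :=
  Real.exp_pos _

variable [DecidableEq ι] {K : ℝ} {e : ι → ZMod 2}

open scoped Classical in
/-- The partition function with each codeword of `C` counted once, whereas `Zf` counts every
generator combination `α` separately. -/
noncomputable def codePartition (C : Submodule (ZMod 2) (ι → ZMod 2)) (e : ι → ZMod 2)
    (K : ℝ) : ℝ :=
  ∑ v with v ∈ C, boltzmannWeight K e v

theorem codePartition_pos (C : Submodule (ZMod 2) (ι → ZMod 2)) (e : ι → ZMod 2) (K : ℝ) :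
    0 < codePartition C e K :=
  sum_pos (fun v _ ↦ boltzmannWeight_pos K e v) ⟨0, by simp⟩

theorem codePartition_mono {T C : Submodule (ZMod 2) (ι → ZMod 2)} (h : T ≤ C)
    (e : ι → ZMod 2) (K : ℝ) : codePartition T e K ≤ codePartition C e K := by
  classical
  exact sum_le_sum_of_subset_of_nonneg (monotone_filter_right _ fun _ _ hv ↦ h hv)
    fun v _ _ ↦ (boltzmannWeight_pos K e v).le

theorem boltzmannWeight_eq_add_charVec_mul_flipFactor {v : ι → ZMod 2} {c : Finset ι}
    (hv : ∀ b ∈ c, v b = 1) :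
    boltzmannWeight K e v = boltzmannWeight K e (v + charVec c) * flipFactor K e c := by
  have hbond : ∀ b, (-1 : ℝ) ^ ((e b).val + (v b).val) =
      (-1) ^ ((e b).val + ((v + charVec c) b).val) +
        if b ∈ c then -2 * (-1) ^ (e b).val else 0 := by
    intro b
    by_cases hb : b ∈ c
    · have h11 : (1 + 1 : ZMod 2) = 0 := by decide
      simp only [Pi.add_apply, charVec, hb, hv b hb, if_true, h11, ZMod.val_zero,
        ZMod.val_one]
      ring
    · simp [charVec, hb]
  rw [boltzmannWeight, boltzmannWeight, flipFactor, ← Real.exp_sum, ← Real.exp_add,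
    sum_congr rfl fun b _ ↦ hbond b, sum_add_distrib, mul_add, sum_ite_mem, univ_inter,
    ← mul_sum, ← mul_sum]
  ring_nf

theorem sum_le_sum_sum_filter_of_forall_exists {α γ N : Type*} [AddCommMonoid N]
    [PartialOrder N] [IsOrderedAddMonoid N] {s : Finset α} {M : Finset γ}
    {P : γ → α → Prop} [∀ c, DecidablePred (P c)] (hcover : ∀ a ∈ s, ∃ c ∈ M, P c a)
    {f : α → N} (hf : ∀ a ∈ s, 0 ≤ f a) :
    ∑ a ∈ s, f a ≤ ∑ c ∈ M, ∑ a ∈ s with P c a, f a := by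
  simp only [sum_filter]
  rw [sum_comm]
  refine sum_le_sum fun a ha ↦ ?_
  obtain ⟨c, hcM, hc⟩ := hcover a ha
  have hnonneg : ∀ c ∈ M, 0 ≤ if P c a then f a else 0 := fun c _ ↦ by
    split_ifs
    exacts [hf a ha, le_rfl]
  simpa only [hc, if_true] using single_le_sum hnonneg hcM

open scoped Classical in
theorem sum_boltzmannWeight_filter_le {C : Submodule (ZMod 2) (ι → ZMod 2)} {c : Finset ι}
    (hc : charVec c ∈ C) :
    ∑ v with v ∈ C ∧ ∀ b ∈ c, v b = 1, boltzmannWeight K e v ≤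
      flipFactor K e c * codePartition C e K := by
  calc ∑ v with v ∈ C ∧ ∀ b ∈ c, v b = 1, boltzmannWeight K e v
      = ∑ v with v ∈ C ∧ ∀ b ∈ c, v b = 1,
          flipFactor K e c * boltzmannWeight K e (v + charVec c) := by
        refine sum_congr rfl fun v hv ↦ ?_
        rw [boltzmannWeight_eq_add_charVec_mul_flipFactor (mem_filter.1 hv).2.2, mul_comm]
    _ ≤ ∑ v with v ∈ C, flipFactor K e c * boltzmannWeight K e (v + charVec c) :=
        sum_le_sum_of_subset_of_nonneg (monotone_filter_right _ fun _ _ hv ↦ hv.1)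
          fun v _ _ ↦ mul_nonneg (flipFactor_pos K e c).le (boltzmannWeight_pos K e _).le
    _ = flipFactor K e c * codePartition C e K := by
        rw [← mul_sum, codePartition]
        congr 1
        exact sum_equiv (Equiv.addRight (charVec c))
          (fun v ↦ by simp [C.add_mem_iff_left hc]) fun _ _ ↦ rfl

/- Peierls' argument: a nontrivial word contains a minimal support `c`, and erasing `c` from it
costs exactly the factor `flipFactor K e c`. -/
theorem codePartition_le_add (T C : Submodule (ZMod 2) (ι → ZMod 2)) (e : ι → ZMod 2)
    (K : ℝ) :
    codePartition C e K ≤ codePartition T e K +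
      (∑ c ∈ minimalSupports T C, flipFactor K e c) * codePartition C e K := by
  classical
  have hnonneg : ∀ v, 0 ≤ boltzmannWeight K e v := fun v ↦ (boltzmannWeight_pos K e v).le
  have htrivial : ∑ v with v ∈ C ∧ v ∈ T, boltzmannWeight K e v ≤ codePartition T e K :=
    sum_le_sum_of_subset_of_nonneg (monotone_filter_right _ fun _ _ hv ↦ hv.2)
      fun v _ _ ↦ hnonneg v
  have hcover : ∀ v ∈ ({v | v ∈ C ∧ v ∉ T} : Finset (ι → ZMod 2)),
      ∃ c ∈ minimalSupports T C, ∀ b ∈ c, v b = 1 := fun v hv ↦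
    have ⟨hvC, hvT⟩ := (mem_filter.1 hv).2
    exists_mem_minimalSupports_of_mem_of_notMem hvC hvT
  have hnontrivial : ∑ v with v ∈ C ∧ v ∉ T, boltzmannWeight K e v ≤
      (∑ c ∈ minimalSupports T C, flipFactor K e c) * codePartition C e K := by
    rw [sum_mul]
    refine (sum_le_sum_sum_filter_of_forall_exists hcover fun v _ ↦ hnonneg v).trans
      (sum_le_sum fun c hc ↦ ?_)
    refine le_trans ?_ (sum_boltzmannWeight_filter_le (mem_minimalSupports.1 hc).prop.1)
    rw [filter_filter]
    exact sum_le_sum_of_subset_of_nonneg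
      (monotone_filter_right _ fun _ _ hv ↦ ⟨hv.1.1, hv.2⟩) fun v _ _ ↦ hnonneg v
  calc codePartition C e K
      = ∑ v with v ∈ C ∧ v ∈ T, boltzmannWeight K e v +
          ∑ v with v ∈ C ∧ v ∉ T, boltzmannWeight K e v := by
        rw [← filter_filter, ← filter_filter, sum_filter_add_sum_filter_not, codePartition]
    _ ≤ _ := add_le_add htrivial hnontrivial

theorem one_sub_sum_flipFactor_le_div (T C : Submodule (ZMod 2) (ι → ZMod 2))
    (e : ι → ZMod 2) (K : ℝ) :
    1 - ∑ c ∈ minimalSupports T C, flipFactor K e c ≤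
      codePartition T e K / codePartition C e K := by
  rw [le_div_iff₀ (codePartition_pos C e K)]
  linarith [codePartition_le_add T C e K]

end Peierls

section AdaptedDual

open scoped Classical in
theorem sum_comp_linearMap_eq_card_ker_nsmul {R V W M : Type*} [Ring R] [AddCommGroup V]
    [Module R V] [AddCommGroup W] [Module R W] [AddCommMonoid M] [Fintype V] [Fintype W]
    (φ : V →ₗ[R] W) (f : W → M) :
    ∑ x, f (φ x) = Nat.card (LinearMap.ker φ) • ∑ y with y ∈ LinearMap.range φ, f y := by
  have hfiber : ∀ y ∈ LinearMap.range φ, #{x | φ x = y} = Nat.card (LinearMap.ker φ) := by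
    intro y hy
    rw [AddMonoidHom.card_fiber_eq_of_mem_range φ hy ⟨0, map_zero φ⟩, Nat.card_eq_fintype_card,
      Fintype.card_subtype]
    simp only [LinearMap.mem_ker]
  rw [smul_sum, ← sum_fiberwise_of_maps_to (s := univ)
    (t := {y | y ∈ LinearMap.range φ}) (g := φ) fun x _ ↦ by simp]
  refine sum_congr rfl fun y hy ↦ ?_
  rw [sum_congr rfl fun x hx ↦ by rw [(mem_filter.1 hx).2], sum_const,
    hfiber y (mem_filter.1 hy).2]

theorem Zf_eq_card_ker_mul_codePartition {ρ : Type*} [Fintype ρ] [DecidableEq ρ] {n : ℕ}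
    (G : Matrix ρ (Fin n) (ZMod 2)) (e : Fin n → ZMod 2) (K : ℝ) :
    Zf G e K = Nat.card (LinearMap.ker G.vecMulLinear) *
      codePartition (LinearMap.range G.vecMulLinear) e K := by
  rw [codePartition, ← nsmul_eq_mul, ← sum_comp_linearMap_eq_card_ker_nsmul]
  rfl

variable {rG rH k n : ℕ} {G : Matrix (Fin rG) (Fin n) (ZMod 2)}
  {H : Matrix (Fin rH) (Fin n) (ZMod 2)} {Hs : Matrix (Fin rG ⊕ Fin k) (Fin n) (ZMod 2)}

theorem IsAdaptedDual.range_le_ker (hHs : IsAdaptedDual G H Hs) :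
    LinearMap.range G.vecMulLinear ≤ LinearMap.ker H.mulVecLin := by
  rw [← hHs.2, range_vecMulLinear, range_vecMulLinear]
  refine Submodule.span_mono ?_
  rintro _ ⟨i, rfl⟩
  exact ⟨Sum.inl i, hHs.1 i⟩

theorem IsAdaptedDual.finrank_ker_vecMulLinear_eq (hHs : IsAdaptedDual G H Hs)
    (hk : k = n - G.rank - H.rank) :
    Module.finrank (ZMod 2) (LinearMap.ker Hs.vecMulLinear) =
      Module.finrank (ZMod 2) (LinearMap.ker G.vecMulLinear) := by
  have hrankG : Module.finrank (ZMod 2) (LinearMap.range G.vecMulLinear) = G.rank := by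
    rw [← rank_transpose, Matrix.rank, mulVecLin_transpose]
  have hrankH : Module.finrank (ZMod 2) (LinearMap.range H.mulVecLin) = H.rank := rfl
  have nullityH := LinearMap.finrank_range_add_finrank_ker H.mulVecLin
  have nullityG := LinearMap.finrank_range_add_finrank_ker G.vecMulLinear
  have nullityHs := LinearMap.finrank_range_add_finrank_ker Hs.vecMulLinear
  have hmono := Submodule.finrank_mono hHs.range_le_ker
  simp only [Module.finrank_fintype_fun_eq_card, Fintype.card_fin, Fintype.card_sum]
    at nullityH nullityG nullityHs
  rw [hHs.2] at nullityHs
  omega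

theorem IsAdaptedDual.Zf_div_Zf (hHs : IsAdaptedDual G H Hs) (hk : k = n - G.rank - H.rank)
    (e : Fin n → ZMod 2) (K : ℝ) :
    Zf G e K / Zf Hs e K = codePartition (LinearMap.range G.vecMulLinear) e K /
      codePartition (LinearMap.ker H.mulVecLin) e K := by
  have hcard : Nat.card (LinearMap.ker Hs.vecMulLinear) =
      Nat.card (LinearMap.ker G.vecMulLinear) := by
    rw [Module.natCard_eq_pow_finrank (K := ZMod 2) (V := LinearMap.ker Hs.vecMulLinear),
      Module.natCard_eq_pow_finrank (K := ZMod 2) (V := LinearMap.ker G.vecMulLinear),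
      hHs.finrank_ker_vecMulLinear_eq hk]
  rw [Zf_eq_card_ker_mul_codePartition, Zf_eq_card_ker_mul_codePartition, hcard, hHs.2]
  exact mul_div_mul_left _ _ (Nat.cast_ne_zero.2 Nat.card_pos.ne')

end AdaptedDual

section DisorderAverage

variable {n : ℕ} {p : ℝ}

theorem davg_mono (hp0 : 0 ≤ p) (hp1 : p ≤ 1) {X Y : (Fin n → ZMod 2) → ℝ}
    (h : ∀ e, X e ≤ Y e) : davg p X ≤ davg p Y :=
  sum_le_sum fun e _ ↦ mul_le_mul_of_nonneg_left (h e)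
    (mul_nonneg (pow_nonneg hp0 _) (pow_nonneg (sub_nonneg.2 hp1) _))

theorem davg_sub (p : ℝ) (X Y : (Fin n → ZMod 2) → ℝ) :
    davg p (fun e ↦ X e - Y e) = davg p X - davg p Y := by
  simp only [davg, mul_sub, sum_sub_distrib]

theorem davg_finset_sum {γ : Type*} (p : ℝ) (M : Finset γ) (X : γ → (Fin n → ZMod 2) → ℝ) :
    davg p (fun e ↦ ∑ c ∈ M, X c e) = ∑ c ∈ M, davg p (X c) := by
  simp only [davg, mul_sum]
  exact sum_comm

theorem pow_hammingNorm_mul_pow_eq_prod (p : ℝ) (e : Fin n → ZMod 2) :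
    p ^ hammingNorm e * (1 - p) ^ (n - hammingNorm e) =
      ∏ b, if e b = 0 then 1 - p else p := by
  have hzeros : #{b | e b = 0} = n - hammingNorm e := by
    have h := card_filter_add_card_filter_not (s := (univ : Finset (Fin n))) (e · = 0)
    rw [card_univ, Fintype.card_fin] at h
    exact Nat.eq_sub_of_add_eq h
  rw [prod_ite, prod_const, prod_const, hzeros, mul_comm]
  rfl

theorem davg_prod (p : ℝ) (f : Fin n → ZMod 2 → ℝ) :
    davg p (fun e ↦ ∏ b, f b (e b)) = ∏ b, ((1 - p) * f b 0 + p * f b 1) := by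
  have hbit : ∀ b, ∑ a : ZMod 2, (if a = 0 then 1 - p else p) * f b a =
      (1 - p) * f b 0 + p * f b 1 := fun b ↦ by
    exact Fin.sum_univ_two fun a : ZMod 2 ↦ (if a = 0 then 1 - p else p) * f b a
  simp only [davg, pow_hammingNorm_mul_pow_eq_prod, ← prod_mul_distrib, ← hbit]
  rw [prod_univ_sum, Fintype.piFinset_univ]

theorem davg_one (p : ℝ) : davg p (fun _ : Fin n → ZMod 2 ↦ 1) = 1 := by
  simpa using davg_prod p fun (_ : Fin n) _ ↦ 1

/-- The disorder average of the factor that a single bit contributes to `flipFactor`. -/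
noncomputable def meanFlipFactor (K p : ℝ) : ℝ :=
  Real.exp (-(2 * K)) * (1 - p) + Real.exp (2 * K) * p

theorem meanFlipFactor_pos (K : ℝ) (hp0 : 0 ≤ p) (hp1 : p ≤ 1) : 0 < meanFlipFactor K p := by
  rcases hp0.eq_or_lt with rfl | hp
  · simp [meanFlipFactor, Real.exp_pos]
  · exact add_pos_of_nonneg_of_pos (mul_nonneg (Real.exp_pos _).le (sub_nonneg.2 hp1))
      (mul_pos (Real.exp_pos _) hp)

theorem davg_flipFactor (K p : ℝ) (c : Finset (Fin n)) :
    davg p (fun e ↦ flipFactor K e c) = meanFlipFactor K p ^ #c := by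
  have hprod : ∀ e : Fin n → ZMod 2, flipFactor K e c =
      ∏ b, if b ∈ c then Real.exp (-(2 * K) * (-1) ^ (e b).val) else 1 := fun e ↦ by
    rw [prod_ite_mem, univ_inter, flipFactor]
  have hbit : ∀ b, ((1 - p) * (if b ∈ c then Real.exp (-(2 * K) * (-1) ^ (0 : ZMod 2).val) else 1)
      + p * if b ∈ c then Real.exp (-(2 * K) * (-1) ^ (1 : ZMod 2).val) else 1) =
      if b ∈ c then meanFlipFactor K p else 1 := by
    intro b
    split_ifs
    · simp [meanFlipFactor, ZMod.val_one, mul_comm]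
    · ring
  simp only [hprod]
  rw [davg_prod p fun b a ↦ if b ∈ c then Real.exp (-(2 * K) * (-1) ^ a.val) else 1,
    prod_congr rfl fun b _ ↦ hbit b, prod_ite_mem, univ_inter, prod_const]

end DisorderAverage

section SuccessProbability

variable {rG rH k n : ℕ} {G : Matrix (Fin rG) (Fin n) (ZMod 2)}
  {H : Matrix (Fin rH) (Fin n) (ZMod 2)} {Hs : Matrix (Fin rG ⊕ Fin k) (Fin n) (ZMod 2)}
  {p : ℝ}

theorem IsAdaptedDual.Psucc_le_one (hHs : IsAdaptedDual G H Hs)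
    (hk : k = n - G.rank - H.rank) (K : ℝ) (hp0 : 0 ≤ p) (hp1 : p ≤ 1) :
    Psucc G Hs K p ≤ 1 := by
  rw [← davg_one (n := n) p]
  refine davg_mono hp0 hp1 fun e ↦ ?_
  rw [hHs.Zf_div_Zf hk]
  exact div_le_one_of_le₀ (codePartition_mono hHs.range_le_ker e K)
    (codePartition_pos _ e K).le

theorem IsAdaptedDual.one_sub_sum_le_Psucc (hHs : IsAdaptedDual G H Hs)
    (hk : k = n - G.rank - H.rank) (K : ℝ) (hp0 : 0 ≤ p) (hp1 : p ≤ 1) :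
    1 - ∑ c ∈ minimalSupports (LinearMap.range G.vecMulLinear) (LinearMap.ker H.mulVecLin),
      meanFlipFactor K p ^ #c ≤ Psucc G Hs K p := by
  simp only [← davg_flipFactor, ← davg_finset_sum]
  rw [← davg_one (n := n) p, ← davg_sub]
  refine davg_mono hp0 hp1 fun e ↦ ?_
  rw [hHs.Zf_div_Zf hk]
  exact one_sub_sum_flipFactor_le_div _ _ e K

theorem IsAdaptedDual.one_sub_le_Psucc (hHs : IsAdaptedDual G H Hs)
    (hk : k = n - G.rank - H.rank) {m : ℕ} (hm : 2 ≤ m) (hH : ∀ i, hammingNorm (H i) ≤ m)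
    {K : ℝ} (hp0 : 0 ≤ p) (hp1 : p ≤ 1) (hK : ((m : ℝ) - 1) * meanFlipFactor K p < 1) :
    1 - n * ((((m : ℝ) - 1) * meanFlipFactor K p) ^ dCSS G H /
      (1 - ((m : ℝ) - 1) * meanFlipFactor K p)) ≤ Psucc G Hs K p := by
  grw [← hHs.one_sub_sum_le_Psucc hk K hp0 hp1,
    sum_minimalSupports_pow_card_le hm G hH (meanFlipFactor_pos K hp0 hp1).le hK]

end SuccessProbability

theorem tendsto_mul_pow_of_mul_log_le {τ : Type*} {l : Filter τ} {N d : τ → ℕ}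
    (hN : Tendsto N l atTop) {D x : ℝ} (hD : 0 < D) (hd : ∀ t, D * Real.log (N t) ≤ d t)
    (hx0 : 0 < x) (hx : x < Real.exp (-1 / D)) :
    Tendsto (fun t ↦ (N t : ℝ) * x ^ d t) l (nhds 0) := by
  have hexp : 1 + D * Real.log x < 0 := by
    have := (lt_div_iff₀ hD).1 ((Real.log_lt_iff_lt_exp hx0).2 hx)
    linarith
  have hx1 : x ≤ 1 :=
    hx.le.trans (Real.exp_le_one_iff.2 (div_nonpos_of_nonpos_of_nonneg (by norm_num) hD.le))
  have hbound : ∀ t, 1 ≤ N t → (N t : ℝ) * x ^ d t ≤ (N t : ℝ) ^ (1 + D * Real.log x) := by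
    intro t ht
    have hNt : (0 : ℝ) < N t := by exact_mod_cast ht
    calc (N t : ℝ) * x ^ d t
        ≤ N t * x ^ (D * Real.log (N t)) := by
          rw [← Real.rpow_natCast x]
          exact mul_le_mul_of_nonneg_left
            (Real.rpow_le_rpow_of_exponent_ge hx0 hx1 (hd t)) hNt.le
      _ = (N t : ℝ) ^ (1 + D * Real.log x) := by
          rw [Real.rpow_add hNt, Real.rpow_one, Real.rpow_def_of_pos hx0,
            Real.rpow_def_of_pos hNt]
          ring_nf
  have hlim : Tendsto (fun t ↦ (N t : ℝ) ^ (1 + D * Real.log x)) l (nhds 0) := by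
    simpa [Function.comp_def] using (tendsto_rpow_neg_atTop (neg_pos.2 hexp)).comp
      (tendsto_natCast_atTop_atTop.comp hN)
  refine squeeze_zero' (Eventually.of_forall fun t ↦ by positivity) ?_ hlim
  filter_upwards [hN.eventually_ge_atTop 1] with t ht using hbound t ht

theorem stmt13_general {τ : Type*} {l : Filter τ} (rG rH kk nn : τ → ℕ)
    (G : ∀ t, Matrix (Fin (rG t)) (Fin (nn t)) (ZMod 2))
    (H : ∀ t, Matrix (Fin (rH t)) (Fin (nn t)) (ZMod 2))
    (hk : ∀ t, kk t = nn t - (G t).rank - (H t).rank)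
    (Hs : ∀ t, Matrix (Fin (rG t) ⊕ Fin (kk t)) (Fin (nn t)) (ZMod 2))
    (hHs : ∀ t, IsAdaptedDual (G t) (H t) (Hs t)) (hnn : Tendsto nn l atTop)
    (m : ℕ) (hm : 2 ≤ m) (hrowH : ∀ t i, hammingNorm (H t i) ≤ m)
    (D : ℝ) (hD : 0 < D) (hdist : ∀ t, D * Real.log (nn t) ≤ dCSS (G t) (H t))
    (K p : ℝ) (hp0 : 0 ≤ p) (hp1 : p ≤ 1)
    (hregion : ((m : ℝ) - 1) * (Real.exp (-(2 * K)) * (1 - p) + Real.exp (2 * K) * p) <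
      Real.exp (-1 / D)) :
    Tendsto (fun t ↦ Psucc (G t) (Hs t) K p) l (nhds 1) := by
  set x := ((m : ℝ) - 1) * meanFlipFactor K p
  have hx0 : 0 < x := by
    have hm1 : (1 : ℝ) < m := by exact_mod_cast hm
    exact mul_pos (sub_pos.2 hm1) (meanFlipFactor_pos K hp0 hp1)
  have hx1 : x < 1 :=
    hregion.trans (Real.exp_lt_one_iff.2 (div_neg_of_neg_of_pos (by norm_num) hD))
  have hlim : Tendsto (fun t ↦ 1 - nn t * (x ^ dCSS (G t) (H t) / (1 - x))) l (nhds 1) := by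
    simpa [mul_div_assoc] using
      ((tendsto_mul_pow_of_mul_log_le hnn hD hdist hx0 hregion).div_const (1 - x)).const_sub 1
  exact tendsto_of_tendsto_of_tendsto_of_le_of_le hlim tendsto_const_nhds
    (fun t ↦ (hHs t).one_sub_le_Psucc (hk t) hm (hrowH t) hp0 hp1 hx1)
    (fun t ↦ (hHs t).Psucc_le_one (hk t) K hp0 hp1)

/-- In the region `(m−1)[e^{−2K}(1−p) + e^{2K}p] < e^{−1/D}`, the point `(p,K)` is
decodable: the ML-decoding success probabilities converge to one. -/
theorem stmt13 (rG rH kk nn : ℕ → ℕ)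
    (G : ∀ t, Matrix (Fin (rG t)) (Fin (nn t)) (ZMod 2))
    (H : ∀ t, Matrix (Fin (rH t)) (Fin (nn t)) (ZMod 2))
    (hGH : ∀ t, G t * (H t)ᵀ = 0)
    (hk : ∀ t, kk t = nn t - (G t).rank - (H t).rank)
    (Hs : ∀ t, Matrix (Fin (rG t) ⊕ Fin (kk t)) (Fin (nn t)) (ZMod 2))
    (hHs : ∀ t, IsAdaptedDual (G t) (H t) (Hs t))
    (hmono : StrictMono nn)
    (m : ℕ) (hm : 2 ≤ m)
    (hrowG : ∀ t i, hammingNorm (G t i) ≤ m)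
    (hrowH : ∀ t i, hammingNorm (H t i) ≤ m)
    (D : ℝ) (hD : 0 < D)
    (hdist : ∀ t, D * Real.log (nn t) ≤
      (min (dCSS (G t) (H t)) (dCSS (H t) (G t)) : ℝ))
    (K p : ℝ) (hK : 0 < K) (hp0 : 0 ≤ p) (hp1 : p ≤ 1)
    (hregion : ((m : ℝ) - 1) * (Real.exp (-(2 * K)) * (1 - p) + Real.exp (2 * K) * p) <
      Real.exp (-1 / D)) :
    Tendsto (fun t => Psucc (G t) (Hs t) K p) atTop (nhds 1) :=
  stmt13_general rG rH kk nn G H hk Hs hHs hmono.tendsto_atTop m hm hrowH D hD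
    (fun t ↦ (hdist t).trans (min_le_left _ _)) K p hp0 hp1 hregion
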